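/- For j ≥ 2, the expectation E_{a,b}[ (a-1)(b-1)²(a - 1/2)(a+b-1)^{j-1}/(a+b-2)³ ] over a, b independent uniform on (0,1) is negative when j is odd, and the sequence of these expectations over even j is decreasing in j. -/

import Mathlib

/-- `E j = E_{a,b}[ (a-1)(b-1)²(a-1/2)(a+b-1)^{j-1}/(a+b-2)³ ]` for `a, b` i.i.d.
uniform on `(0,1)`, written as a double integral over the unit square. -/
noncomputable def dirExp (j : ℕ) : ℝ :=
  ∫ b in (0:ℝ)..1, ∫ a in (0:ℝ)..1,
    (a - 1) * (b - 1) ^ 2 * (a - 1/2) * (a + b - 1) ^ (j - 1) / (a + b - 2) ^ 3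

open MeasureTheory Set

/-- The integrand after the shift `u = a + b - 1`. -/
noncomputable def shiftedF (n : ℕ) (b u : ℝ) : ℝ :=
  (u - b) * (b - 1) ^ 2 * (u - b + 1/2) * u ^ n / (u - 1) ^ 3

/-- The region of integration. -/
def shiftedS : Set (ℝ × ℝ) := {p | 0 < p.1 ∧ p.1 ≤ 1 ∧ p.1 - 1 < p.2 ∧ p.2 ≤ p.1}

noncomputable def lowerA (n : ℕ) (u : ℝ) : ℝ :=
  u ^ n * ((1 - 40 * u ^ 2 - 20 * u ^ 3 + 15 * u ^ 4 - 4 * u ^ 5) / 120) / (1 - u) ^ 3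

noncomputable def upperB (n : ℕ) (u : ℝ) : ℝ :=
  u ^ n * ((1 - u) * (1 + 4 * u) / 120)

lemma measurableSet_shiftedS : MeasurableSet shiftedS := by
  unfold shiftedS
  refine MeasurableSet.inter (measurableSet_lt measurable_const measurable_fst) ?_
  refine MeasurableSet.inter (measurableSet_le measurable_fst measurable_const) ?_
  refine MeasurableSet.inter (measurableSet_lt (by fun_prop) measurable_snd) ?_
  exact measurableSet_le measurable_snd measurable_fst

lemma shiftedF_bound (n : ℕ) (b u : ℝ) (h : (b, u) ∈ shiftedS) : ‖shiftedF n b u‖ ≤ 1 := by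
  obtain ⟨h1, h2, h3, h4⟩ := h
  simp only at h1 h2 h3 h4
  rw [Real.norm_eq_abs]
  unfold shiftedF
  rw [abs_div]
  have hu : |u ^ n| ≤ 1 := by
    rw [abs_pow]
    exact pow_le_one₀ (abs_nonneg _) (abs_le.2 ⟨by linarith, by linarith⟩)
  have hv : |u - b + 1/2| ≤ 1 := abs_le.2 ⟨by linarith, by linarith⟩
  have hd : |(u - 1) ^ 3| = (1 - u) ^ 3 := by
    rw [abs_pow, abs_of_nonpos (by linarith)]; ring
  rw [hd]
  apply div_le_one_of_le₀ _ (pow_nonneg (by linarith) 3)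
  have e : |(u - b) * (b - 1) ^ 2 * (u - b + 1/2) * u ^ n| =
      ((b - u) * (1 - b) ^ 2) * (|u - b + 1/2| * |u ^ n|) := by
    rw [abs_mul, abs_mul, abs_mul, abs_of_nonpos (by linarith : u - b ≤ 0), abs_of_nonneg (sq_nonneg _)]
    ring
  rw [e]
  have h5 : |u - b + 1/2| * |u ^ n| ≤ 1 := mul_le_one₀ hv (abs_nonneg _) hu
  have h6 : 0 ≤ (b - u) * (1 - b) ^ 2 := mul_nonneg (by linarith) (sq_nonneg _)
  have h7 : (b - u) * (1 - b) ^ 2 ≤ (1 - u) ^ 3 := by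
    obtain ⟨x, hx⟩ : ∃ x, x = b - u := ⟨_, rfl⟩
    obtain ⟨y, hy⟩ : ∃ y, y = 1 - b := ⟨_, rfl⟩
    have hx0 : 0 ≤ x := by linarith
    have hy0 : 0 ≤ y := by linarith
    rw [← hx, ← hy, show 1 - u = x + y by rw [hx, hy]; ring]
    have : (x + y) ^ 3 - x * y ^ 2 = x ^ 3 + 3 * x ^ 2 * y + 2 * x * y ^ 2 + y ^ 3 := by ring
    have : 0 ≤ x ^ 3 + 3 * x ^ 2 * y + 2 * x * y ^ 2 + y ^ 3 := by positivity
    linarith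
  calc _ ≤ (b - u) * (1 - b) ^ 2 * 1 := mul_le_mul_of_nonneg_left h5 h6
    _ ≤ _ := by linarith

lemma integrable_H (n : ℕ) :
    Integrable (fun p : ℝ × ℝ => shiftedS.indicator (fun p => shiftedF n p.1 p.2) p)
      (volume.prod volume) := by
  rw [show (fun p : ℝ × ℝ => shiftedS.indicator (fun p => shiftedF n p.1 p.2) p) =
    shiftedS.indicator (fun p => shiftedF n p.1 p.2) from rfl]
  rw [integrable_indicator_iff measurableSet_shiftedS]
  have hfin : (volume.prod volume : Measure (ℝ × ℝ)) shiftedS < ⊤ := by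
    have hsub : shiftedS ⊆ Icc (0:ℝ) 1 ×ˢ Icc (-1:ℝ) 1 := by
      rintro ⟨b, u⟩ ⟨h1, h2, h3, h4⟩
      simp only at h1 h2 h3 h4
      exact ⟨⟨h1.le, h2⟩, ⟨by simp only; linarith, by simp only; linarith⟩⟩
    refine (measure_mono hsub).trans_lt ?_
    rw [Measure.prod_prod]
    simp
  refine Measure.integrableOn_of_bounded (M := 1) hfin.ne ?_ ?_
  · apply Measurable.aestronglyMeasurable
    unfold shiftedF
    fun_prop
  · rw [ae_restrict_iff' measurableSet_shiftedS]
    exact Filter.Eventually.of_forall fun p hp => shiftedF_bound n p.1 p.2 hp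

lemma fiberA (n : ℕ) (u : ℝ) (hu : -1 < u) (hu0 : u < 0) :
    ∫ b, shiftedS.indicator (fun p => shiftedF n p.1 p.2) (b, u) = lowerA n u := by
  have e : (fun b => shiftedS.indicator (fun p => shiftedF n p.1 p.2) (b, u)) =
      (Ioo 0 (u + 1)).indicator (fun b => shiftedF n b u) := by
    funext b
    by_cases hb : b ∈ Ioo 0 (u + 1)
    · rw [indicator_of_mem hb, indicator_of_mem]
      obtain ⟨h1, h2⟩ := hb
      exact ⟨h1, by simp only; linarith, by simp only; linarith, by simp only; linarith⟩
    · rw [indicator_of_notMem hb, indicator_of_notMem]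
      rintro ⟨h1, h2, h3, h4⟩
      simp only at h1 h2 h3 h4
      exact hb ⟨h1, by linarith⟩
  rw [e, integral_indicator measurableSet_Ioo, ← integral_Ioc_eq_integral_Ioo,
    ← intervalIntegral.integral_of_le (by linarith)]
  have hne : (1 - u) ≠ 0 := by linarith
  have hne' : (u - 1) ≠ 0 := by linarith
  rw [intervalIntegral.integral_eq_sub_of_hasDerivAt (f := fun b =>
    -((b - 1) ^ 5 / 5 + (2 * (1 - u) - 1/2) * (b - 1) ^ 4 / 4 +
      ((1 - u) ^ 2 - (1 - u) / 2) * (b - 1) ^ 3 / 3) * u ^ n / (1 - u) ^ 3)]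
  · unfold lowerA
    field_simp
    ring
  · intro b _
    have hb : HasDerivAt (fun b : ℝ => b - 1) 1 b := (hasDerivAt_id b).sub_const 1
    have := ((((((hb.pow 5).div_const 5).add (((hb.pow 4).const_mul (2 * (1 - u) - 1/2)).div_const 4)).add
      (((hb.pow 3).const_mul ((1 - u) ^ 2 - (1 - u) / 2)).div_const 3)).neg).mul_const (u ^ n)).div_const ((1 - u) ^ 3)
    refine HasDerivAt.congr_deriv this ?_
    unfold shiftedF
    simp only [Nat.reduceSub]
    rw [show (u - 1) ^ 3 = - (1 - u) ^ 3 by ring]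
    field_simp
    push_cast
    ring
  · apply Continuous.intervalIntegrable
    unfold shiftedF
    fun_prop

lemma fiberB (n : ℕ) (u : ℝ) (hu : 0 < u) (hu0 : u < 1) :
    ∫ b, shiftedS.indicator (fun p => shiftedF n p.1 p.2) (b, u) = upperB n u := by
  have e : (fun b => shiftedS.indicator (fun p => shiftedF n p.1 p.2) (b, u)) =
      (Icc u 1).indicator (fun b => shiftedF n b u) := by
    funext b
    by_cases hb : b ∈ Icc u 1
    · rw [indicator_of_mem hb, indicator_of_mem]
      obtain ⟨h1, h2⟩ := hb
      exact ⟨by simp only; linarith, by simp only; linarith, by simp only; linarith, by simp only; linarith⟩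
    · rw [indicator_of_notMem hb, indicator_of_notMem]
      rintro ⟨h1, h2, h3, h4⟩
      simp only at h1 h2 h3 h4
      exact hb ⟨h4, by linarith⟩
  rw [e, integral_indicator measurableSet_Icc, integral_Icc_eq_integral_Ioc,
    ← intervalIntegral.integral_of_le (by linarith)]
  have hne : (1 - u) ≠ 0 := by linarith
  have hne' : (u - 1) ≠ 0 := by linarith
  rw [intervalIntegral.integral_eq_sub_of_hasDerivAt (f := fun b =>
    -((b - 1) ^ 5 / 5 + (2 * (1 - u) - 1/2) * (b - 1) ^ 4 / 4 +
      ((1 - u) ^ 2 - (1 - u) / 2) * (b - 1) ^ 3 / 3) * u ^ n / (1 - u) ^ 3)]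
  · unfold upperB
    field_simp
    ring
  · intro b _
    have hb : HasDerivAt (fun b : ℝ => b - 1) 1 b := (hasDerivAt_id b).sub_const 1
    have := ((((((hb.pow 5).div_const 5).add (((hb.pow 4).const_mul (2 * (1 - u) - 1/2)).div_const 4)).add
      (((hb.pow 3).const_mul ((1 - u) ^ 2 - (1 - u) / 2)).div_const 3)).neg).mul_const (u ^ n)).div_const ((1 - u) ^ 3)
    refine HasDerivAt.congr_deriv this ?_
    unfold shiftedF
    simp only [Nat.reduceSub]
    rw [show (u - 1) ^ 3 = - (1 - u) ^ 3 by ring]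
    field_simp
    push_cast
    ring
  · apply Continuous.intervalIntegrable
    unfold shiftedF
    fun_prop

lemma fiber0 (n : ℕ) (u : ℝ) (hu : u < -1 ∨ 1 < u) :
    ∫ b, shiftedS.indicator (fun p => shiftedF n p.1 p.2) (b, u) = 0 := by
  have e : (fun b => shiftedS.indicator (fun p => shiftedF n p.1 p.2) (b, u)) = fun _ => 0 := by
    funext b
    rw [indicator_of_notMem]
    rintro ⟨h1, h2, h3, h4⟩
    simp only at h1 h2 h3 h4
    rcases hu with hu | hu <;> linarith
  rw [e]; simp

lemma dirExp_eq_prod (j : ℕ) : dirExp j =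
    ∫ b, ∫ u, shiftedS.indicator (fun p => shiftedF (j - 1) p.1 p.2) (b, u) := by
  unfold dirExp
  rw [intervalIntegral.integral_of_le zero_le_one, ← integral_indicator measurableSet_Ioc]
  congr 1
  funext b
  by_cases hb : b ∈ Ioc (0:ℝ) 1
  · rw [indicator_of_mem hb]
    have e : (fun u => shiftedS.indicator (fun p => shiftedF (j - 1) p.1 p.2) (b, u)) =
        (Ioc (b - 1) b).indicator (fun u => shiftedF (j - 1) b u) := by
      funext u
      by_cases hu : u ∈ Ioc (b - 1) b
      · rw [indicator_of_mem hu, indicator_of_mem]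
        exact ⟨hb.1, hb.2, hu.1, hu.2⟩
      · rw [indicator_of_notMem hu, indicator_of_notMem]
        rintro ⟨h1, h2, h3, h4⟩
        exact hu ⟨h3, h4⟩
    rw [e, integral_indicator measurableSet_Ioc, ← intervalIntegral.integral_of_le (by linarith)]
    have := intervalIntegral.integral_comp_add_right (a := 0) (b := 1)
      (fun u => shiftedF (j - 1) b u) (b - 1)
    rw [show (0:ℝ) + (b - 1) = b - 1 by ring, show (1:ℝ) + (b - 1) = b by ring] at this
    rw [← this]
    congr 1
    funext a
    unfold shiftedF
    ring_nf
  · rw [indicator_of_notMem hb]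
    symm
    have e : (fun u => shiftedS.indicator (fun p => shiftedF (j - 1) p.1 p.2) (b, u)) = fun _ => 0 := by
      funext u
      rw [indicator_of_notMem]
      rintro ⟨h1, h2, h3, h4⟩
      exact hb ⟨h1, h2⟩
    rw [e]; simp

lemma intA (n : ℕ) : IntervalIntegrable (lowerA n) volume (-1) 0 := by
  apply ContinuousOn.intervalIntegrable
  unfold lowerA
  apply ContinuousOn.div (by fun_prop) (by fun_prop)
  intro u hu
  rw [uIcc_of_le (by norm_num)] at hu
  have : 0 < 1 - u := by linarith [hu.2]
  positivity

lemma intB (n : ℕ) : IntervalIntegrable (upperB n) volume 0 1 := by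
  apply Continuous.intervalIntegrable
  unfold upperB
  fun_prop

lemma dirExp_eq (j : ℕ) : dirExp j =
    (∫ u in (-1:ℝ)..0, lowerA (j - 1) u) + ∫ u in (0:ℝ)..1, upperB (j - 1) u := by
  rw [dirExp_eq_prod, integral_integral_swap (integrable_H (j - 1))]
  have hA := intA (j - 1)
  have hB := intB (j - 1)
  rw [intervalIntegrable_iff_integrableOn_Ioo_of_le (by norm_num)] at hA hB
  rw [intervalIntegral.integral_of_le (by norm_num), intervalIntegral.integral_of_le (by norm_num),
    integral_Ioc_eq_integral_Ioo, integral_Ioc_eq_integral_Ioo,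
    ← integral_indicator measurableSet_Ioo, ← integral_indicator measurableSet_Ioo,
    ← integral_add ((integrable_indicator_iff measurableSet_Ioo).2 hA)
      ((integrable_indicator_iff measurableSet_Ioo).2 hB)]
  apply integral_congr_ae
  have h1 : ∀ᵐ u : ℝ, u ≠ -1 := by simp [ae_iff]
  have h2 : ∀ᵐ u : ℝ, u ≠ 0 := by simp [ae_iff]
  have h3 : ∀ᵐ u : ℝ, u ≠ 1 := by simp [ae_iff]
  filter_upwards [h1, h2, h3] with u h1 h2 h3
  rcases lt_or_gt_of_ne h1 with h1 | h1
  · rw [fiber0 _ _ (Or.inl h1), indicator_of_notMem, indicator_of_notMem]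
    · simp
    · exact fun h => by linarith [h.1]
    · exact fun h => by linarith [h.1]
  rcases lt_or_gt_of_ne h2 with h2 | h2
  · rw [fiberA _ _ h1 h2, indicator_of_mem (show u ∈ Ioo (-1:ℝ) 0 from ⟨h1, h2⟩), indicator_of_notMem]
    · simp
    · exact fun h => by linarith [h.1]
  rcases lt_or_gt_of_ne h3 with h3 | h3
  · rw [fiberB _ _ h2 h3, indicator_of_mem (show u ∈ Ioo (0:ℝ) 1 from ⟨h2, h3⟩), indicator_of_notMem]
    · simp
    · exact fun h => by linarith [h.2]
  · rw [fiber0 _ _ (Or.inr h3), indicator_of_notMem, indicator_of_notMem]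
    · simp
    · exact fun h => by linarith [h.2]
    · exact fun h => by linarith [h.2]

lemma dirExp_eq' (j : ℕ) : dirExp j = ∫ t in (0:ℝ)..1, (lowerA (j - 1) (-t) + upperB (j - 1) t) := by
  have hA : IntervalIntegrable (fun t => lowerA (j - 1) (-t)) volume 0 1 := by
    apply ContinuousOn.intervalIntegrable
    unfold lowerA
    apply ContinuousOn.div (by fun_prop) (by fun_prop)
    intro u hu
    rw [uIcc_of_le (by norm_num)] at hu
    have : 0 < 1 - -u := by linarith [hu.1]
    positivity
  rw [intervalIntegral.integral_add hA (intB _), dirExp_eq]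
  have := intervalIntegral.integral_comp_neg (a := 0) (b := 1) (lowerA (j - 1))
  rw [this]; simp

lemma dirExp_odd (j : ℕ) (hj : 2 ≤ j) (ho : Odd j) : dirExp j =
    ∫ t in (0:ℝ)..1, t ^ (j - 1) * ((1 - t) * (2 + 8 * t - 24 * t ^ 2 - 6 * t ^ 3)) / (120 * (1 + t) ^ 3) := by
  rw [dirExp_eq']
  apply intervalIntegral.integral_congr
  intro t ht
  rw [uIcc_of_le zero_le_one] at ht
  have : 0 < 1 + t := by linarith [ht.1]
  have he : Even (j - 1) := by
    obtain ⟨k, rfl⟩ := ho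
    simp
  simp only [lowerA, upperB, he.neg_pow, sub_neg_eq_add]
  field_simp
  ring

lemma dirExp_even (j : ℕ) (hj : 2 ≤ j) (he : Even j) : dirExp j =
    ∫ t in (0:ℝ)..1, t ^ (j - 1) * (2 * t * (1 - t) * (3 + 27 * t + 16 * t ^ 2 + 4 * t ^ 3)) / (120 * (1 + t) ^ 3) := by
  rw [dirExp_eq']
  apply intervalIntegral.integral_congr
  intro t ht
  rw [uIcc_of_le zero_le_one] at ht
  have : 0 < 1 + t := by linarith [ht.1]
  have ho : Odd (j - 1) := Nat.Even.sub_odd (by omega) he odd_one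
  simp only [lowerA, upperB, ho.neg_pow, sub_neg_eq_add]
  field_simp
  ring

lemma int_rat (f : ℝ → ℝ) (hf : Continuous f) :
    IntervalIntegrable (fun t => f t / (120 * (1 + t) ^ 3)) volume 0 1 := by
  apply ContinuousOn.intervalIntegrable
  apply ContinuousOn.div hf.continuousOn (by fun_prop)
  intro u hu
  rw [uIcc_of_le (by norm_num)] at hu
  have : 0 < 1 + u := by linarith [hu.1]
  positivity

lemma base_neg :
    ∫ t in (0:ℝ)..1, t ^ 2 * ((1 - t) * (2 + 8 * t - 24 * t ^ 2 - 6 * t ^ 3)) / (120 * (1 + t) ^ 3) < 0 := by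
  rw [intervalIntegral.integral_eq_sub_of_hasDerivAt (f := fun t =>
    (3/2 * t ^ 4 - 25 * t ^ 2 + 150 * t - 298 * Real.log (1 + t) - 196 * (1 + t)⁻¹
      + 24 * ((1 + t)⁻¹) ^ 2) / 120) _ (int_rat _ (by fun_prop))]
  · have := Real.log_two_gt_d9
    norm_num
    linarith
  · intro t ht
    rw [uIcc_of_le (by norm_num)] at ht
    have hp : 0 < 1 + t := by linarith [ht.1]
    have hb : HasDerivAt (fun t : ℝ => 1 + t) 1 t := (hasDerivAt_id t).const_add 1
    have hi := hasDerivAt_id t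
    have := ((((((((hi.pow 4).const_mul (3/2)).sub ((hi.pow 2).const_mul 25)).add (hi.const_mul 150)).sub
      ((hb.log hp.ne').const_mul 298)).sub ((hb.inv hp.ne').const_mul 196))).add
      (((hb.inv hp.ne').pow 2).const_mul 24)).div_const 120
    refine HasDerivAt.congr_deriv this ?_
    simp [-inv_pow]
    field_simp
    ring

theorem stmt_15 :
    (∀ j : ℕ, 2 ≤ j → Odd j → dirExp j < 0) ∧
      (∀ j j' : ℕ, 2 ≤ j → j < j' → Even j → Even j' → dirExp j' < dirExp j) := by
  constructor
  · intro j hj ho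
    obtain ⟨c, hc, hc0⟩ : ∃ c ∈ Icc (0:ℝ) 1, 2 + 8 * c - 24 * c ^ 2 - 6 * c ^ 3 = 0 := by
      have := intermediate_value_Icc' (zero_le_one (α := ℝ))
        (f := fun c => 2 + 8 * c - 24 * c ^ 2 - 6 * c ^ 3) (by fun_prop)
      obtain ⟨c, hc, h⟩ := this (a := (0:ℝ)) (mem_Icc.2 ⟨by norm_num, by norm_num⟩)
      exact ⟨c, hc, h⟩
    have hcpos : 0 < c := by
      rcases hc.1.eq_or_lt with h | h
      · rw [← h] at hc0; norm_num at hc0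
      · exact h
    obtain ⟨m, rfl⟩ : ∃ m, j = m + 3 := ⟨j - 3, by obtain ⟨k, rfl⟩ := ho; omega⟩
    rw [dirExp_odd _ hj ho]
    have hle : ∫ t in (0:ℝ)..1, t ^ (m + 3 - 1) * ((1 - t) * (2 + 8 * t - 24 * t ^ 2 - 6 * t ^ 3)) / (120 * (1 + t) ^ 3)
        ≤ ∫ t in (0:ℝ)..1, c ^ m * (t ^ 2 * ((1 - t) * (2 + 8 * t - 24 * t ^ 2 - 6 * t ^ 3)) / (120 * (1 + t) ^ 3)) := by
      apply intervalIntegral.integral_mono_on zero_le_one (int_rat _ (by fun_prop))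
        ((int_rat _ (by fun_prop)).const_mul _)
      intro t ht
      have hp : 0 < 1 + t := by linarith [ht.1]
      rw [← mul_div_assoc]
      apply div_le_div_of_nonneg_right _ (by positivity)
      have hkey : (t ^ m - c ^ m) * (2 + 8 * t - 24 * t ^ 2 - 6 * t ^ 3) ≤ 0 := by
        have hq : 2 + 8 * t - 24 * t ^ 2 - 6 * t ^ 3 =
            (c - t) * ((2 + 24 * t * c + 6 * t * c * (t + c)) / c) := by
          field_simp
          linear_combination t * hc0
        have hpos : 0 ≤ (2 + 24 * t * c + 6 * t * c * (t + c)) / c := by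
          have := ht.1
          positivity
        rw [hq, ← mul_assoc]
        apply mul_nonpos_of_nonpos_of_nonneg _ hpos
        rcases le_total t c with h | h
        · exact mul_nonpos_of_nonpos_of_nonneg (sub_nonpos.2 (pow_le_pow_left₀ ht.1 h m)) (by linarith)
        · exact mul_nonpos_of_nonneg_of_nonpos (sub_nonneg.2 (pow_le_pow_left₀ hcpos.le h m)) (by linarith)
      have h2 : 0 ≤ t ^ 2 * (1 - t) := mul_nonneg (sq_nonneg _) (by linarith [ht.2])
      have h3 := mul_nonpos_of_nonneg_of_nonpos h2 hkey
      rw [show m + 3 - 1 = m + 2 by omega, pow_add]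
      linarith
    refine hle.trans_lt ?_
    rw [intervalIntegral.integral_const_mul]
    exact mul_neg_of_pos_of_neg (by positivity) base_neg
  · intro j j' hj hjj he he'
    rw [dirExp_even j hj he, dirExp_even j' (by omega) he', ← sub_pos,
      ← intervalIntegral.integral_sub (int_rat _ (by fun_prop)) (int_rat _ (by fun_prop))]
    apply intervalIntegral.intervalIntegral_pos_of_pos_on
      ((int_rat _ (by fun_prop)).sub (int_rat _ (by fun_prop))) _ zero_lt_one
    intro t ht
    have ht0 := ht.1
    have hp : 0 < 1 + t := by linarith [ht.1]
    have h1 : 0 < 1 - t := by linarith [ht.2]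
    have hlt : t ^ (j' - 1) < t ^ (j - 1) := pow_lt_pow_right_of_lt_one₀ ht.1 ht.2 (by omega)
    rw [← sub_div, ← sub_mul]
    have := sub_pos.2 hlt
    positivity
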